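/- Let 0 < λ₁ < λ₂ < λ₃ and set m = (λ₂² − λ₁²)/(λ₃² − λ₁²). Then the normalization constant w² of the genus-1 condensate density of states satisfies w² = (∫_{λ₁}^{λ₂} y³/√((y² − λ₁²)(λ₂² − y²)(λ₃² − y²)) dy) / (∫_{λ₁}^{λ₂} y/√((y² − λ₁²)(λ₂² − y²)(λ₃² − y²)) dy) = λ₃² − (λ₃² − λ₁²)·E(m)/K(m). -/

import Mathlib

/-- The complete elliptic integral of the first kind, `K(m) = ∫₀^{π/2} dθ/√(1 - m sin²θ)`. -/
noncomputable def ellipticK (m : ℝ) : ℝ :=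
  ∫ θ in (0:ℝ)..(Real.pi / 2), 1 / Real.sqrt (1 - m * Real.sin θ ^ 2)

/-- The complete elliptic integral of the second kind, `E(m) = ∫₀^{π/2} √(1 - m sin²θ) dθ`. -/
noncomputable def ellipticE (m : ℝ) : ℝ :=
  ∫ θ in (0:ℝ)..(Real.pi / 2), Real.sqrt (1 - m * Real.sin θ ^ 2)

/-!
The substitution `u = y²` turns both integrals over the s-gap into integrals over `[a, b]` with
weight `1 / √((u - a) (b - u) (c - u))`, where `a, b, c = l1², l2², l3²`. Under the further
substitution `u = a + (b - a) sin² θ` the arcsine weight `du / √((u - a) (b - u))` becomes `2 dθ`,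
while `c - u` becomes `(c - a) (1 - m sin² θ)`. So `1 / √(c - u)` integrates to a multiple of `K(m)`
and `√(c - u)` to a multiple of `E(m)`, and `u / √(c - u) = c / √(c - u) - √(c - u)` expresses the
numerator through these two.
-/

open Real Set

lemma one_sub_mul_sin_sq_pos {m : ℝ} (hm : m < 1) (θ : ℝ) : 0 < 1 - m * sin θ ^ 2 := by
  rcases le_total m 0 with hm_nonpos | hm_nonneg
  · linarith [mul_nonpos_of_nonpos_of_nonneg hm_nonpos (sq_nonneg (sin θ))]
  · linarith [mul_le_of_le_one_right hm_nonneg (sin_sq_le_one θ)]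

lemma intervalIntegrable_one_div_sqrt_one_sub_mul_sin_sq {m : ℝ} (hm : m < 1) (s t : ℝ) :
    IntervalIntegrable (fun θ => 1 / √(1 - m * sin θ ^ 2)) MeasureTheory.volume s t :=
  Continuous.intervalIntegrable
    (continuous_const.div (by fun_prop) fun θ => (sqrt_pos.2 (one_sub_mul_sin_sq_pos hm θ)).ne')
    s t

lemma ellipticK_pos {m : ℝ} (hm : m < 1) : 0 < ellipticK m :=
  intervalIntegral.intervalIntegral_pos_of_pos
    (intervalIntegrable_one_div_sqrt_one_sub_mul_sin_sq hm _ _)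
    (fun θ => one_div_pos.2 (sqrt_pos.2 (one_sub_mul_sin_sq_pos hm θ))) pi_div_two_pos

section ChangeOfVariables

variable {E : Type*} [NormedAddCommGroup E] [NormedSpace ℝ E]

lemma integral_smul_comp_sq {s t : ℝ} (hs : 0 ≤ s) (ht : 0 ≤ t) (g : ℝ → E) :
    ∫ y in s..t, y • g (y ^ 2) = (1 / 2 : ℝ) • ∫ u in s ^ 2..t ^ 2, g u := by
  have hsubst : ∫ y in s..t, (2 * y) • g (y ^ 2) = ∫ u in s ^ 2..t ^ 2, g u :=
    intervalIntegral.integral_deriv_smul_comp_of_deriv_nonneg (f := fun y => y ^ 2) (by fun_prop)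
      (fun y _ => by simpa using hasDerivAt_pow 2 y)
      fun y hy => by linarith [le_min hs ht, hy.1]
  simp only [← hsubst, ← intervalIntegral.integral_smul, smul_smul]
  congr! 3
  ring

lemma integral_inv_sqrt_smul_eq_integral_comp_sin_sq {a b : ℝ} (hab : a < b) (g : ℝ → E) :
    ∫ u in a..b, (√((u - a) * (b - u)))⁻¹ • g u =
      (2 : ℝ) • ∫ θ in 0..π / 2, g (a + (b - a) * sin θ ^ 2) := by
  have hsin_cos_pos : ∀ θ ∈ Ioo 0 (π / 2), 0 < sin θ * cos θ := fun θ hθ =>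
    mul_pos (sin_pos_of_pos_of_lt_pi hθ.1 (by linarith [hθ.2, pi_pos]))
      (cos_pos_of_mem_Ioo ⟨by linarith [hθ.1, pi_pos], hθ.2⟩)
  have hba : 0 < b - a := sub_pos.2 hab
  set x : ℝ → ℝ := fun θ => a + (b - a) * sin θ ^ 2 with hx
  have hderiv (θ : ℝ) : HasDerivAt x (2 * ((b - a) * (sin θ * cos θ))) θ :=
    ((((hasDerivAt_sin θ).pow 2).const_mul (b - a)).const_add a).congr_deriv (by
      simp only [Nat.cast_ofNat, Nat.add_one_sub_one, pow_one]
      ring)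
  have hweight (θ : ℝ) : (x θ - a) * (b - x θ) = ((b - a) * (sin θ * cos θ)) ^ 2 := by
    linear_combination (-(b - a) ^ 2 * sin θ ^ 2) * sin_sq_add_cos_sq θ
  have hsubst := intervalIntegral.integral_deriv_smul_comp_of_deriv_nonneg
    (a := 0) (b := π / 2) (g := fun u => (√((u - a) * (b - u)))⁻¹ • g u)
    (by fun_prop : Continuous x).continuousOn (fun θ _ => hderiv θ) fun θ hθ => by
      rw [min_eq_left pi_div_two_pos.le, max_eq_right pi_div_two_pos.le] at hθ
      have := hsin_cos_pos θ hθ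
      positivity
  have hx_zero : x 0 = a := by simp [hx]
  have hx_end : x (π / 2) = b := by simp [hx]
  rw [hx_zero, hx_end] at hsubst
  rw [← hsubst, ← intervalIntegral.integral_smul]
  refine intervalIntegral.integral_congr_Ioo_of_le pi_div_two_pos.le fun θ hθ => ?_
  have hpos : 0 < (b - a) * (sin θ * cos θ) := mul_pos hba (hsin_cos_pos θ hθ)
  simp only [Function.comp_apply, hweight, sqrt_sq hpos.le, smul_smul]
  rw [mul_inv_cancel_right₀ hpos.ne']

end ChangeOfVariables

section EllipticIntegrals

variable {a b c : ℝ}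

lemma sub_div_sub_lt_one (hac : a < c) (hbc : b < c) : (b - a) / (c - a) < 1 :=
  (div_lt_one (sub_pos.2 hac)).2 (sub_lt_sub_right hbc a)

lemma sqrt_sub_add_mul_sin_sq (hac : a < c) (θ : ℝ) :
    √(c - (a + (b - a) * sin θ ^ 2)) =
      √(c - a) * √(1 - (b - a) / (c - a) * sin θ ^ 2) := by
  have hca : 0 < c - a := sub_pos.2 hac
  rw [← sqrt_mul hca.le]
  congr 1
  field_simp
  ring

lemma integral_div_sqrt_cubic_eq_integral_comp_sin_sq (hab : a < b) (hbc : b ≤ c) (p : ℝ → ℝ) :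
    ∫ u in a..b, p u / √((u - a) * (b - u) * (c - u)) =
      2 * ∫ θ in 0..π / 2, p (a + (b - a) * sin θ ^ 2) / √(c - (a + (b - a) * sin θ ^ 2)) := by
  rw [← smul_eq_mul,
    ← integral_inv_sqrt_smul_eq_integral_comp_sin_sq hab fun u => p u / √(c - u)]
  refine intervalIntegral.integral_congr_Ioo_of_le hab.le fun u hu => ?_
  have hcu : 0 ≤ c - u := by linarith [hu.2]
  simp only [sqrt_mul' _ hcu, smul_eq_mul]
  ring

lemma integral_one_div_sqrt_cubic (hab : a < b) (hbc : b < c) :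
    ∫ u in a..b, 1 / √((u - a) * (b - u) * (c - u)) =
      2 / √(c - a) * ellipticK ((b - a) / (c - a)) := by
  rw [integral_div_sqrt_cubic_eq_integral_comp_sin_sq hab hbc.le fun _ => 1, ellipticK]
  simp only [sqrt_sub_add_mul_sin_sq (hab.trans hbc), ← one_div_mul_one_div,
    intervalIntegral.integral_const_mul]
  ring

lemma integral_id_div_sqrt_cubic (hab : a < b) (hbc : b < c) :
    ∫ u in a..b, u / √((u - a) * (b - u) * (c - u)) =
      2 / √(c - a) * (c * ellipticK ((b - a) / (c - a)) -
        (c - a) * ellipticE ((b - a) / (c - a))) := by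
  have hac : a < c := hab.trans hbc
  have hsplit (u : ℝ) : u / √(c - u) = c * (1 / √(c - u)) - √(c - u) := by
    linear_combination -div_sqrt (x := c - u)
  have hintegrand (θ : ℝ) :
      (a + (b - a) * sin θ ^ 2) / √(c - (a + (b - a) * sin θ ^ 2)) =
        1 / √(c - a) * (c * (1 / √(1 - (b - a) / (c - a) * sin θ ^ 2)) -
          (c - a) * √(1 - (b - a) / (c - a) * sin θ ^ 2)) := by
    rw [hsplit, sqrt_sub_add_mul_sin_sq hac, ← one_div_mul_one_div]
    linear_combination √(1 - (b - a) / (c - a) * sin θ ^ 2) * div_sqrt (x := c - a)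
  rw [integral_div_sqrt_cubic_eq_integral_comp_sin_sq hab hbc.le fun u => u, ellipticK, ellipticE]
  simp only [hintegrand, intervalIntegral.integral_const_mul]
  rw [intervalIntegral.integral_sub
      ((intervalIntegrable_one_div_sqrt_one_sub_mul_sin_sq
        (sub_div_sub_lt_one hac hbc) _ _).const_mul c)
      (Continuous.intervalIntegrable (by fun_prop) _ _),
    intervalIntegral.integral_const_mul, intervalIntegral.integral_const_mul]
  ring

lemma integral_id_div_sqrt_cubic_div_integral_one_div_sqrt_cubic (hab : a < b) (hbc : b < c) :
    (∫ u in a..b, u / √((u - a) * (b - u) * (c - u))) /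
        ∫ u in a..b, 1 / √((u - a) * (b - u) * (c - u)) =
      c - (c - a) * (ellipticE ((b - a) / (c - a)) / ellipticK ((b - a) / (c - a))) := by
  have hac : a < c := hab.trans hbc
  have hK := ellipticK_pos (sub_div_sub_lt_one hac hbc)
  have hscale : 2 / √(c - a) ≠ 0 := (div_pos two_pos (sqrt_pos.2 (sub_pos.2 hac))).ne'
  rw [integral_id_div_sqrt_cubic hab hbc, integral_one_div_sqrt_cubic hab hbc,
    mul_div_mul_left _ _ hscale, sub_div, mul_div_cancel_right₀ _ hK.ne', mul_div_assoc]

end EllipticIntegrals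

/-- Normalization constant of the genus-1 condensate density of states:
`w² = (∫_{λ₁}^{λ₂} y³/R̃ dy)/(∫_{λ₁}^{λ₂} y/R̃ dy) = λ₃² - (λ₃²-λ₁²)·E(m)/K(m)`,
with `m = (λ₂²-λ₁²)/(λ₃²-λ₁²)`. -/
theorem genus1_condensate_w_sq (l1 l2 l3 : ℝ)
    (h1 : 0 < l1) (h12 : l1 < l2) (h23 : l2 < l3) :
    (∫ y in l1..l2,
        y ^ 3 / Real.sqrt ((y ^ 2 - l1 ^ 2) * (l2 ^ 2 - y ^ 2) * (l3 ^ 2 - y ^ 2))) /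
      (∫ y in l1..l2,
        y / Real.sqrt ((y ^ 2 - l1 ^ 2) * (l2 ^ 2 - y ^ 2) * (l3 ^ 2 - y ^ 2))) =
      l3 ^ 2 - (l3 ^ 2 - l1 ^ 2) *
        (ellipticE ((l2 ^ 2 - l1 ^ 2) / (l3 ^ 2 - l1 ^ 2)) /
          ellipticK ((l2 ^ 2 - l1 ^ 2) / (l3 ^ 2 - l1 ^ 2))) := by
  have h2 : 0 < l2 := h1.trans h12
  have hsq12 : l1 ^ 2 < l2 ^ 2 := pow_lt_pow_left₀ h12 h1.le two_ne_zero
  have hsq23 : l2 ^ 2 < l3 ^ 2 := pow_lt_pow_left₀ h23 h2.le two_ne_zero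
  set R : ℝ → ℝ := fun u => √((u - l1 ^ 2) * (l2 ^ 2 - u) * (l3 ^ 2 - u))
  have hnum : ∫ y in l1..l2, y ^ 3 / R (y ^ 2) =
      1 / 2 * ∫ u in l1 ^ 2..l2 ^ 2, u / R u := by
    rw [← smul_eq_mul, ← integral_smul_comp_sq h1.le h2.le]
    simp only [smul_eq_mul, ← mul_div_assoc, ← pow_succ']
  have hden : ∫ y in l1..l2, y / R (y ^ 2) = 1 / 2 * ∫ u in l1 ^ 2..l2 ^ 2, 1 / R u := by
    rw [← smul_eq_mul, ← integral_smul_comp_sq h1.le h2.le]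
    simp only [smul_eq_mul, mul_one_div]
  rw [hnum, hden, mul_div_mul_left _ _ one_half_pos.ne',
    integral_id_div_sqrt_cubic_div_integral_one_div_sqrt_cubic hsq12 hsq23]
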